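/- Let D be a non-trivial, non-symmetric 2-(v,k,3) design with 3 dividing r, admitting a flag-transitive, point-primitive automorphism group G that is almost simple with socle X = PSL(2,q), where X acts point-primitively on D with point stabilizer X_α maximal in X. Then X_α is not isomorphic to PGL(2,q₀) with q = q₀² odd; that is, the case (q odd square, X_α ≅ PGL(2,√q), v = √q(q+1)/2) does not occur. -/

import Mathlib

/-!
Weigh a point `β` by the number `w β` of involutions of `X` that fix both `α` and `β`. As the
weight is invariant under `G_α`, which is transitive on the `r` blocks through `α`, these blocks
all have the same weight, and counting the pairs `(β, B)` with `α, β ∈ B` shows that `r` divides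
`lam * (∑ β, w β - w α)`. Since `q = q₀²` is a square, `-1` is a square in the field of order `q`,
so the involutions of `PSL(2,q)` form a single class; counting involutions of `PSL(2,q)` and
`PGL(2,q₀)` then shows that each involution fixes `q₀` points, whence `w α = q₀²` and
`∑ β, w β = q₀³`. On the other hand `r` divides `lam * (v - 1)`, and `v - 1` is coprime to `q₀`
because `2 * v = q₀ * (q₀² + 1)`. Hence `r` divides `lam * (q₀ - 1)`, while Fisher's inequality
`k ≤ r` gives `lam * (v - 1) = r * (k - 1) < r²`; for `lam ≤ 3` the two bounds are incompatible.
-/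

open scoped Pointwise
open Matrix

namespace FT

variable {Pt : Type*}

/-- `IsDesign 𝓑 k lam` says that the family `𝓑` of subsets of the point set `Pt` is the
block set of a `2-(v, k, lam)` design: every block has `k` points and any two distinct
points lie on exactly `lam` common blocks. -/
structure IsDesign (𝓑 : Set (Set Pt)) (k lam : ℕ) : Prop where
  block_card : ∀ B ∈ 𝓑, Nat.card B = k
  pair_count : ∀ x y : Pt, x ≠ y → Nat.card {B : Set Pt | B ∈ 𝓑 ∧ x ∈ B ∧ y ∈ B} = lam

/-- The group `G` acts on the design with point set `Pt` and block set `𝓑` as a group of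
automorphisms. -/
def ActsOn (G : Type*) [Group G] [MulAction G Pt] (𝓑 : Set (Set Pt)) : Prop :=
  ∀ (g : G), ∀ B ∈ 𝓑, g • B ∈ 𝓑

/-- The group `G` is transitive on the flags (incident point-block pairs) of the design. -/
def FlagTransitive (G : Type*) [Group G] [MulAction G Pt] (𝓑 : Set (Set Pt)) : Prop :=
  ∀ B ∈ 𝓑, ∀ C ∈ 𝓑, ∀ x ∈ B, ∀ y ∈ C, ∃ g : G, g • B = C ∧ g • x = y

/-- The action of `G` on `Pt` is primitive: it is transitive and every block of
imprimitivity is trivial. -/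
def PointPrimitive (G : Type*) [Group G] (Pt : Type*) [MulAction G Pt] : Prop :=
  MulAction.IsPretransitive G Pt ∧
    ∀ s : Set Pt, MulAction.IsBlock G s → s.Subsingleton ∨ s = Set.univ

/-- The number of blocks of `𝓑` through the point `x` (the replication number, for a
flag-transitive design). -/
noncomputable def repNum (𝓑 : Set (Set Pt)) (x : Pt) : ℕ :=
  Nat.card {B : Set Pt | B ∈ 𝓑 ∧ x ∈ B}

/-- The projective general linear group `PGL(2,K)`, as the quotient of `GL(2,K)` by its
center. -/
abbrev PGL2 (K : Type*) [Field K] :=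
  GL (Fin 2) K ⧸ Subgroup.center (GL (Fin 2) K)

/-- The projective special linear group `PSL(2,K)`. -/
abbrev PSL2 (K : Type*) [Field K] := Matrix.ProjectiveSpecialLinearGroup (Fin 2) K

end FT

namespace FT

section Quotient

variable {H : Type*} [Group H] (N : Subgroup H) [N.Normal]

theorem orderOf_mk_eq_two_iff (x : H) : orderOf (x : H ⧸ N) = 2 ↔ x ∉ N ∧ x ^ 2 ∈ N := by
  rw [orderOf_eq_prime_iff, ← QuotientGroup.mk_pow, ne_eq, QuotientGroup.eq_one_iff,
    QuotientGroup.eq_one_iff, and_comm]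

theorem card_mul_card_orderOf_eq_two_quotient :
    Nat.card N * Nat.card {y : H ⧸ N // orderOf y = 2} =
      Nat.card {x : H // x ∉ N ∧ x ^ 2 ∈ N} := by
  rw [← Nat.card_prod]
  exact Nat.card_congr
    ((QuotientGroup.preimageMkEquivSubgroupProdSet N {y | orderOf y = 2}).symm.trans
      (Equiv.subtypeEquivRight fun x => orderOf_mk_eq_two_iff N x))

end Quotient

section TraceZero

variable {K : Type*} [Field K]

theorem sq_eq_trace_smul_sub_det_smul_one {R : Type*} [CommRing R] (A : Matrix (Fin 2) (Fin 2) R) :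
    A ^ 2 = A.trace • A - A.det • 1 := by
  ext i j
  fin_cases i <;> fin_cases j <;>
    simp [pow_two, mul_apply, trace_fin_two, det_fin_two] <;> ring

theorem notMem_range_scalar_and_sq_mem_iff_trace_eq_zero (h2 : (2 : K) ≠ 0)
    {A : Matrix (Fin 2) (Fin 2) K} (hA : A.det ≠ 0) :
    A ∉ Set.range (scalar (Fin 2)) ∧ A ^ 2 ∈ Set.range (scalar (Fin 2)) ↔ A.trace = 0 := by
  constructor
  · rintro ⟨hns, c, hc⟩
    by_contra ht
    have h : A.trace • A = scalar (Fin 2) (c + A.det) := by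
      rw [map_add, hc, sq_eq_trace_smul_sub_det_smul_one, scalar_apply, ← smul_one_eq_diagonal]
      abel
    exact hns ⟨A.trace⁻¹ * (c + A.det), by
      rw [map_mul, ← h, scalar_apply, ← smul_one_eq_diagonal, smul_one_mul, inv_smul_smul₀ ht]⟩
  · intro ht
    refine ⟨?_, -A.det, by
      rw [sq_eq_trace_smul_sub_det_smul_one, ht, scalar_apply, ← smul_one_eq_diagonal]; simp⟩
    rintro ⟨c, rfl⟩
    have hc : c = 0 := by simpa [trace_fin_two, ← two_mul, h2] using ht
    simp [hc] at hA

theorem card_sq_add_mul_eq [Fintype K] [DecidableEq K] (hK : ringChar K ≠ 2) (d : K) :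
    (Nat.card {p : K × K × K // p.1 ^ 2 + p.2.1 * p.2.2 = d} : ℤ) =
      Fintype.card K ^ 2 + quadraticChar K d * Fintype.card K := by
  have inner (a b : K) : (∑ c : K, if a ^ 2 + b * c = d then 1 else 0 : ℤ) =
      if b = 0 then (if a ^ 2 = d then (Fintype.card K : ℤ) else 0) else 1 := by
    by_cases hb : b = 0
    · simp [hb]
    · have (c : K) : a ^ 2 + b * c = d ↔ c = (d - a ^ 2) / b := by
        rw [eq_div_iff hb, ← eq_sub_iff_add_eq', mul_comm]
      simp [this, hb]
  have roots : (∑ a : K, if a ^ 2 = d then (Fintype.card K : ℤ) else 0) =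
      (quadraticChar K d + 1) * Fintype.card K := by
    rw [← quadraticChar_card_sqrts hK, Finset.sum_ite, Finset.sum_const_zero, add_zero,
      Finset.sum_const, nsmul_eq_mul]
    simp
  rw [Nat.card_eq_fintype_card, Fintype.card_subtype, Finset.card_filter]
  push_cast
  simp_rw [Fintype.sum_prod_type, inner]
  rw [Finset.sum_comm]
  calc (∑ b : K, ∑ a : K, if b = 0 then (if a ^ 2 = d then (Fintype.card K : ℤ) else 0) else 1)
      = ∑ b : K, if b = 0 then (quadraticChar K d + 1) * Fintype.card K
          else (Fintype.card K : ℤ) := by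
        refine Finset.sum_congr rfl fun b _ => ?_
        split_ifs
        · exact roots
        · simp
    _ = (quadraticChar K d + 1) * Fintype.card K
          + (Fintype.card K - 1) * Fintype.card K := by
        rw [Fintype.sum_eq_add_sum_compl 0, if_pos rfl, Finset.sum_congr rfl fun b hb =>
          if_neg (by simpa using hb), Finset.sum_const, Finset.card_compl, nsmul_eq_mul,
          Finset.card_singleton, Nat.cast_sub Fintype.card_pos, Nat.cast_one]
    _ = Fintype.card K ^ 2 + quadraticChar K d * Fintype.card K := by ring

/-- The coordinates `(a, b, c)` on the trace-zero matrices `!![a, b; c, -a]`. -/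
def traceZeroEquiv (R : Type*) [CommRing R] :
    {A : Matrix (Fin 2) (Fin 2) R // A.trace = 0} ≃ R × R × R where
  toFun A := (A.1 0 0, A.1 0 1, A.1 1 0)
  invFun p := ⟨!![p.1, p.2.1; p.2.2, -p.1], by simp [trace_fin_two]⟩
  left_inv A := by
    have h := eq_neg_of_add_eq_zero_right ((trace_fin_two A.1).symm.trans A.2)
    ext i j
    fin_cases i <;> fin_cases j <;> simp [h]
  right_inv _ := rfl

theorem card_trace_eq_zero [Fintype K] :
    Nat.card {A : Matrix (Fin 2) (Fin 2) K // A.trace = 0} = Fintype.card K ^ 3 := by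
  rw [Nat.card_congr (traceZeroEquiv K), Nat.card_prod, Nat.card_prod, Nat.card_eq_fintype_card]
  ring

theorem card_trace_eq_zero_det_eq [Fintype K] [DecidableEq K] (hK : ringChar K ≠ 2) (d : K) :
    (Nat.card {A : Matrix (Fin 2) (Fin 2) K // A.trace = 0 ∧ A.det = d} : ℤ) =
      Fintype.card K ^ 2 + quadraticChar K (-d) * Fintype.card K := by
  rw [← card_sq_add_mul_eq hK, ← Nat.card_congr (Equiv.subtypeSubtypeEquivSubtypeInter _ _)]
  refine congrArg _ (Nat.card_congr ((traceZeroEquiv K).subtypeEquiv fun A => ?_))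
  have h := (trace_fin_two A.1).symm.trans A.2
  rw [det_fin_two]
  change _ ↔ A.1 0 0 ^ 2 + A.1 0 1 * A.1 1 0 = -d
  constructor <;> intro hd <;> linear_combination A.1 0 0 * h - hd

end TraceZero

section GroupOrders

variable (n R : Type*) [Fintype n] [DecidableEq n] [Nonempty n] [CommRing R]

theorem card_SL_mul_card_units :
    Nat.card (SpecialLinearGroup n R) * Nat.card Rˣ = Nat.card (GL n R) := by
  have ker_det : (SpecialLinearGroup.toGL (n := n) (R := R)).range =
      (GeneralLinearGroup.det (n := n) (R := R)).ker := by
    ext A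
    refine ⟨?_, fun hA => ⟨⟨A.1, congrArg Units.val hA⟩, Units.ext rfl⟩⟩
    rintro ⟨B, rfl⟩
    exact Units.ext B.2
  have := Subgroup.card_mul_index (GeneralLinearGroup.det (n := n) (R := R)).ker
  rwa [Subgroup.index_ker, MonoidHom.range_eq_top.2 GeneralLinearGroup.det_surjective,
    Subgroup.card_top, ← ker_det,
    ← Nat.card_congr (MonoidHom.ofInjective SpecialLinearGroup.toGL_injective).toEquiv] at this

theorem card_center_GL : Nat.card (Subgroup.center (GL n R)) = Nat.card Rˣ := by
  have scalar_inj : Function.Injective (GeneralLinearGroup.scalar (R := R) n) := fun a b h =>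
    Units.ext (scalar_inj.1 (congrArg Units.val h))
  rw [GeneralLinearGroup.center_eq_range_scalar]
  exact (Nat.card_congr (MonoidHom.ofInjective scalar_inj).toEquiv).symm

theorem card_GL_quotient_center [Finite R] :
    Nat.card (GL n R ⧸ Subgroup.center (GL n R)) = Nat.card (SpecialLinearGroup n R) := by
  refine Nat.eq_of_mul_eq_mul_right (Nat.card_pos (α := Rˣ)) ?_
  rw [card_SL_mul_card_units, ← card_center_GL n R,
    ← Subgroup.card_eq_card_quotient_mul_card_subgroup]

end GroupOrders

section ProjectiveGroups

variable {K : Type*} [Field K]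

theorem notMem_center_and_sq_mem_center_GL2_iff (h2 : (2 : K) ≠ 0) (A : GL (Fin 2) K) :
    A ∉ Subgroup.center (GL (Fin 2) K) ∧ A ^ 2 ∈ Subgroup.center (GL (Fin 2) K) ↔
      A.1.trace = 0 := by
  rw [GeneralLinearGroup.mem_center_iff_val_mem_range_scalar,
    GeneralLinearGroup.mem_center_iff_val_mem_range_scalar, Units.val_pow_eq_pow_val]
  exact notMem_range_scalar_and_sq_mem_iff_trace_eq_zero h2 A.det_ne_zero

theorem notMem_center_and_sq_mem_center_SL2_iff (h2 : (2 : K) ≠ 0)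
    (A : SpecialLinearGroup (Fin 2) K) :
    A ∉ Subgroup.center (SpecialLinearGroup (Fin 2) K) ∧
      A ^ 2 ∈ Subgroup.center (SpecialLinearGroup (Fin 2) K) ↔ A.1.trace = 0 := by
  rw [← SpecialLinearGroup.toGL_mem_center_iff, ← SpecialLinearGroup.toGL_mem_center_iff, map_pow]
  exact notMem_center_and_sq_mem_center_GL2_iff h2 (SpecialLinearGroup.toGL A)

theorem card_center_SL2 (hK : ringChar K ≠ 2) :
    Nat.card (Subgroup.center (SpecialLinearGroup (Fin 2) K)) = 2 := by
  have prim : IsPrimitiveRoot (-1 : K) 2 := IsPrimitiveRoot.neg_one (ringChar K) hK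
  rw [Nat.card_congr (SpecialLinearGroup.center_equiv_rootsOfUnity' (0 : Fin 2)).toEquiv,
    Fintype.card_fin]
  have : HasEnoughRootsOfUnity K 2 := ⟨⟨-1, prim⟩, inferInstance⟩
  exact HasEnoughRootsOfUnity.natCard_rootsOfUnity K 2

variable [Fintype K]

theorem card_SL2 : Nat.card (SpecialLinearGroup (Fin 2) K) =
    Fintype.card K * (Fintype.card K ^ 2 - 1) := by
  have hq : 1 < Fintype.card K := Fintype.one_lt_card
  refine Nat.eq_of_mul_eq_mul_right (Nat.sub_pos_of_lt hq) ?_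
  rw [← Nat.card_eq_fintype_card, ← Nat.card_units, card_SL_mul_card_units, card_GL_field,
    Fin.prod_univ_two, Nat.card_units, ← Nat.card_eq_fintype_card]
  simp only [Fin.val_zero, Fin.val_one, pow_zero, pow_one, pow_two, ← Nat.mul_sub_one]
  ring

theorem card_PGL2 : Nat.card (PGL2 K) = Fintype.card K * (Fintype.card K ^ 2 - 1) :=
  (card_GL_quotient_center (Fin 2) K).trans card_SL2

theorem two_mul_card_PSL2 (hK : ringChar K ≠ 2) :
    2 * Nat.card (PSL2 K) = Fintype.card K * (Fintype.card K ^ 2 - 1) := by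
  rw [← card_SL2, Subgroup.card_eq_card_quotient_mul_card_subgroup
    (Subgroup.center (SpecialLinearGroup (Fin 2) K)), card_center_SL2 hK, mul_comm]

theorem card_GL2_trace_eq_zero (hK : ringChar K ≠ 2) :
    Nat.card {A : GL (Fin 2) K // A.1.trace = 0} = (Fintype.card K - 1) * Fintype.card K ^ 2 := by
  classical
  let e : {A : GL (Fin 2) K // A.1.trace = 0} ≃
      {A : {A : Matrix (Fin 2) (Fin 2) K // A.trace = 0} // ¬A.1.det = 0} :=
    { toFun A := ⟨⟨A.1.1, A.2⟩, A.1.det_ne_zero⟩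
      invFun A := ⟨GeneralLinearGroup.mkOfDetNeZero A.1.1 A.2, A.1.2⟩
      left_inv _ := Subtype.ext (Units.ext rfl)
      right_inv _ := rfl }
  have card_det_zero : Nat.card {A : {A : Matrix (Fin 2) (Fin 2) K // A.trace = 0} // A.1.det = 0} =
      Fintype.card K ^ 2 := by
    rw [Nat.card_congr (Equiv.subtypeSubtypeEquivSubtypeInter (trace · = 0) (det · = 0))]
    have h := card_trace_eq_zero_det_eq hK (0 : K)
    rw [neg_zero, quadraticChar_zero, zero_mul, add_zero] at h
    exact_mod_cast h
  rw [Nat.card_congr e, Nat.card_eq_fintype_card, Fintype.card_subtype_compl,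
    ← Nat.card_eq_fintype_card, ← Nat.card_eq_fintype_card, card_trace_eq_zero, card_det_zero,
    Nat.sub_one_mul, pow_succ']

theorem card_orderOf_eq_two_PGL2 (hK : ringChar K ≠ 2) :
    Nat.card {y : PGL2 K // orderOf y = 2} = Fintype.card K ^ 2 := by
  have h := card_mul_card_orderOf_eq_two_quotient (Subgroup.center (GL (Fin 2) K))
  simp_rw [notMem_center_and_sq_mem_center_GL2_iff (Ring.two_ne_zero hK)] at h
  rw [card_GL2_trace_eq_zero hK, card_center_GL, Nat.card_units, Nat.card_eq_fintype_card] at h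
  exact Nat.eq_of_mul_eq_mul_left (Nat.sub_pos_of_lt Fintype.one_lt_card) h

theorem two_mul_card_orderOf_eq_two_PSL2 [DecidableEq K] (hK : ringChar K ≠ 2) :
    (2 * Nat.card {y : PSL2 K // orderOf y = 2} : ℤ) =
      Fintype.card K ^ 2 + quadraticChar K (-1) * Fintype.card K := by
  have h := card_mul_card_orderOf_eq_two_quotient
    (Subgroup.center (SpecialLinearGroup (Fin 2) K))
  simp_rw [notMem_center_and_sq_mem_center_SL2_iff (Ring.two_ne_zero hK), card_center_SL2 hK] at h
  let e : {A : SpecialLinearGroup (Fin 2) K // A.1.trace = 0} ≃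
      {A : Matrix (Fin 2) (Fin 2) K // A.trace = 0 ∧ A.det = 1} :=
    { toFun A := ⟨A.1.1, A.2, A.1.2⟩
      invFun A := ⟨⟨A.1, A.2.2⟩, A.2.1⟩
      left_inv _ := rfl
      right_inv _ := rfl }
  rw [← card_trace_eq_zero_det_eq hK, ← Nat.card_congr e]
  exact_mod_cast h

theorem two_mul_card_orderOf_eq_two_PSL2_of_isSquare (hK : ringChar K ≠ 2)
    (h : IsSquare (-1 : K)) :
    2 * Nat.card {y : PSL2 K // orderOf y = 2} = Fintype.card K * (Fintype.card K + 1) := by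
  classical
  have h' := two_mul_card_orderOf_eq_two_PSL2 hK
  rw [(quadraticChar_one_iff_isSquare (neg_ne_zero.2 one_ne_zero)).2 h] at h'
  rw [one_mul, pow_two, ← mul_add_one] at h'
  exact_mod_cast h'

end ProjectiveGroups

section Conjugacy

theorem semiconjBy_mul_add_mul {R : Type*} [NonUnitalSemiring R] {a b c : R}
    (h : c * (b * b) = a * a * c) : SemiconjBy (a * c + c * b) b a := by
  rw [SemiconjBy, add_mul, mul_add, mul_assoc c, h, add_comm, mul_assoc, mul_assoc]

variable {K : Type*} [Field K]

-- Any `P = A * C + C * D` satisfies `P * D = A * P` as `A² = D²`. The choice `C = 1` gives an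
-- invertible `P` unless `A 0 0 = -i`, and then the permutation matrix does.
theorem exists_det_ne_zero_semiconjBy_of_trace_eq_zero (h2 : (2 : K) ≠ 0) {i : K}
    (hi : i ^ 2 = -1) {A : Matrix (Fin 2) (Fin 2) K} (ht : A.trace = 0) (hd : A.det = 1) :
    ∃ P : Matrix (Fin 2) (Fin 2) K, P.det ≠ 0 ∧ SemiconjBy P !![i, 0; 0, -i] A := by
  have sq_diag : (!![i, 0; 0, -i] * !![i, 0; 0, -i] : Matrix (Fin 2) (Fin 2) K) = -1 := by
    ext j k
    fin_cases j <;> fin_cases k <;> simp [← hi, pow_two]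
  have sq_A : A * A = -1 := by
    rw [← pow_two, sq_eq_trace_smul_sub_det_smul_one, ht, hd, zero_smul, one_smul, zero_sub]
  have semiconj (C : Matrix (Fin 2) (Fin 2) K) :=
    semiconjBy_mul_add_mul (a := A) (b := !![i, 0; 0, -i]) (c := C) (by simp [sq_diag, sq_A])
  rw [trace_fin_two, add_comm, add_eq_zero_iff_eq_neg] at ht
  rw [det_fin_two, ht] at hd
  have hi0 : i ≠ 0 := by rintro rfl; simp at hi
  by_cases ha : A 0 0 = -i
  · refine ⟨_, ?_, semiconj !![0, 1; 1, 0]⟩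
    have hP : A * !![0, 1; 1, 0] + !![0, 1; 1, 0] * !![i, 0; 0, -i] =
        !![A 0 1, -i + -i; i + i, A 1 0] := by
      ext j k
      fin_cases j <;> fin_cases k <;> simp [mul_apply, ha, ht]
    have hdet : (A * !![0, 1; 1, 0] + !![0, 1; 1, 0] * !![i, 0; 0, -i]).det = (2 * i) ^ 2 := by
      rw [ha] at hd
      rw [hP, det_fin_two_of]
      linear_combination -hd - hi
    rw [hdet]
    exact pow_ne_zero 2 (mul_ne_zero h2 hi0)
  · refine ⟨_, ?_, semiconj 1⟩
    have hP : A * 1 + 1 * !![i, 0; 0, -i] = !![A 0 0 + i, A 0 1; A 1 0, -A 0 0 + -i] := by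
      ext j k
      fin_cases j <;> fin_cases k <;> simp [ht]
    have hdet : (A * 1 + 1 * !![i, 0; 0, -i]).det = -(2 * i * (A 0 0 + i)) := by
      rw [hP, det_fin_two_of]
      linear_combination hd + hi
    rw [hdet]
    exact neg_ne_zero.2 (mul_ne_zero (mul_ne_zero h2 hi0) (mt add_eq_zero_iff_eq_neg.1 ha))

theorem isConj_SL2_of_trace_eq_zero (h2 : (2 : K) ≠ 0) (hi : IsSquare (-1 : K))
    {A B : SpecialLinearGroup (Fin 2) K} (hA : A.1.trace = 0) (hB : B.1.trace = 0) :
    IsConj A B := by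
  obtain ⟨i, hi⟩ := hi
  rw [← pow_two, eq_comm] at hi
  let D : SpecialLinearGroup (Fin 2) K := ⟨!![i, 0; 0, -i], by simp [← pow_two, hi]⟩
  suffices h : ∀ A : SpecialLinearGroup (Fin 2) K, A.1.trace = 0 → IsConj D A from
    (h A hA).symm.trans (h B hB)
  intro A hA
  obtain ⟨P, hdet, hP⟩ := exists_det_ne_zero_semiconjBy_of_trace_eq_zero h2 hi hA A.2
  let Q : Matrix (Fin 2) (Fin 2) K := !![1, 0; 0, P.det⁻¹]
  have hQ : SemiconjBy Q !![i, 0; 0, -i] !![i, 0; 0, -i] := by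
    simp [Q, SemiconjBy, mul_comm]
  have hPQ : (P * Q).det = 1 := by simp [Q, hdet]
  exact ⟨toUnits ⟨P * Q, hPQ⟩, Subtype.ext (hP.mul_left hQ)⟩

theorem isConj_PSL2_of_orderOf_eq_two (h2 : (2 : K) ≠ 0) (hi : IsSquare (-1 : K)) {x y : PSL2 K}
    (hx : orderOf x = 2) (hy : orderOf y = 2) : IsConj x y := by
  obtain ⟨A, rfl⟩ := QuotientGroup.mk_surjective x
  obtain ⟨B, rfl⟩ := QuotientGroup.mk_surjective y
  rw [orderOf_mk_eq_two_iff, notMem_center_and_sq_mem_center_SL2_iff h2] at hx hy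
  exact (QuotientGroup.mk' _).map_isConj (isConj_SL2_of_trace_eq_zero h2 hi hx hy)

end Conjugacy

section Designs

variable {Pt : Type*} {𝓑 : Set (Set Pt)} {k lam : ℕ}

open Classical in
/-- The point-block incidence matrix of the block set `𝓑`, with rows indexed by the points. -/
noncomputable def incMatrix (𝓑 : Set (Set Pt)) (R : Type*) [Zero R] [One R] : Matrix Pt 𝓑 R :=
  Matrix.of fun x B => if x ∈ B.1 then 1 else 0

section Incidence

variable {R : Type*} [CommRing R]

open Classical in
theorem incMatrix_transpose_mulVec [Fintype Pt] (w : Pt → R) (B : 𝓑) :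
    ((incMatrix 𝓑 R)ᵀ *ᵥ w) B = ∑ y with y ∈ B.1, w y := by
  simp [mulVec, dotProduct, incMatrix, Finset.sum_filter]

variable [Fintype 𝓑]

open Classical in
theorem sum_incMatrix_row (x : Pt) : ∑ B, incMatrix 𝓑 R x B = repNum 𝓑 x := by
  simp only [incMatrix, of_apply, Finset.sum_boole, ← Fintype.card_subtype,
    ← Nat.card_eq_fintype_card]
  exact congrArg _ (Nat.card_congr (Equiv.subtypeSubtypeEquivSubtypeInter _ (x ∈ ·)))

open Classical in
theorem IsDesign.incMatrix_mul_transpose (hD : IsDesign 𝓑 k lam) :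
    incMatrix 𝓑 R * (incMatrix 𝓑 R)ᵀ =
      diagonal (fun x => (repNum 𝓑 x : R) - lam) + (lam : R) • vecMulVec 1 1 := by
  ext x y
  simp only [mul_apply, transpose_apply, Matrix.add_apply, Matrix.smul_apply, vecMulVec_apply,
    Pi.one_apply, mul_one, smul_eq_mul]
  by_cases hxy : x = y
  · subst hxy
    rw [diagonal_apply_eq, sub_add_cancel, ← sum_incMatrix_row]
    simp [incMatrix, ← ite_and]
  · rw [diagonal_apply_ne _ hxy, zero_add, ← hD.pair_count x y hxy]
    simp only [incMatrix, of_apply, ite_mul, one_mul, zero_mul, ← ite_and, Finset.sum_boole,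
      ← Fintype.card_subtype, ← Nat.card_eq_fintype_card]
    exact congrArg _ (Nat.card_congr
      (Equiv.subtypeSubtypeEquivSubtypeInter _ fun B => x ∈ B ∧ y ∈ B))

variable [Fintype Pt]

open Classical in
theorem IsDesign.incMatrix_mulVec_transpose_mulVec (hD : IsDesign 𝓑 k lam) (w : Pt → R) (x : Pt) :
    (incMatrix 𝓑 R *ᵥ ((incMatrix 𝓑 R)ᵀ *ᵥ w)) x = (repNum 𝓑 x - lam) * w x + lam * ∑ y, w y := by
  rw [mulVec_mulVec, hD.incMatrix_mul_transpose, add_mulVec, Pi.add_apply, mulVec_diagonal,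
    smul_mulVec, vecMulVec_mulVec]
  simp [one_dotProduct]

end Incidence

open Classical in
theorem IsDesign.repNum_mul_eq_of_sum_block_eq [Fintype Pt] (hD : IsDesign 𝓑 k lam) {R : Type*}
    [CommRing R] (w : Pt → R) (x : Pt) (S : R)
    (hS : ∀ B ∈ 𝓑, x ∈ B → ∑ y with y ∈ B, w y = S) :
    repNum 𝓑 x * S = (repNum 𝓑 x - lam) * w x + lam * ∑ y, w y := by
  rw [← hD.incMatrix_mulVec_transpose_mulVec, ← sum_incMatrix_row, Finset.sum_mul]
  refine Finset.sum_congr rfl fun B _ => ?_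
  by_cases hx : x ∈ B.1
  · rw [incMatrix_transpose_mulVec, hS B B.2 hx]
  · simp [incMatrix, hx]

open Classical in
theorem IsDesign.repNum_dvd_mul_sum_sub [Fintype Pt] (hD : IsDesign 𝓑 k lam) {G : Type*} [Group G]
    [MulAction G Pt] (hflag : FlagTransitive G 𝓑) (x : Pt) (w : Pt → ℤ)
    (hw : ∀ g : G, g • x = x → ∀ y, w (g • y) = w y) :
    (repNum 𝓑 x : ℤ) ∣ lam * (∑ y, w y - w x) := by
  obtain ⟨S, hS⟩ : ∃ S, ∀ B ∈ 𝓑, x ∈ B → ∑ y with y ∈ B, w y = S := by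
    by_cases hne : ∃ B ∈ 𝓑, x ∈ B
    · obtain ⟨B₀, hB₀, hx₀⟩ := hne
      refine ⟨∑ y with y ∈ B₀, w y, fun B hB hx => ?_⟩
      obtain ⟨g, rfl, hgx⟩ := hflag B hB B₀ hB₀ x hx x hx₀
      exact Finset.sum_equiv (MulAction.toPerm g) (by simp [Set.smul_mem_smul_set_iff])
        fun y _ => (hw g hgx y).symm
    · exact ⟨0, fun B hB hx => (hne ⟨B, hB, hx⟩).elim⟩
  refine ⟨S - w x, ?_⟩
  linear_combination -hD.repNum_mul_eq_of_sum_block_eq w x S hS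

open Classical in
theorem IsDesign.card_filter_mem_block [Fintype Pt] (hD : IsDesign 𝓑 k lam) {B : Set Pt}
    (hB : B ∈ 𝓑) : (Finset.univ.filter (· ∈ B)).card = k := by
  rw [← hD.block_card B hB, Nat.card_eq_fintype_card, Fintype.card_subtype]

theorem IsDesign.sum_repNum [Fintype Pt] (hD : IsDesign 𝓑 k lam) :
    ∑ x, repNum 𝓑 x = Nat.card 𝓑 * k := by
  classical
  have sum_incMatrix_col (B : 𝓑) : ∑ x, incMatrix 𝓑 ℤ x B = k := by
    simp [incMatrix, hD.card_filter_mem_block B.2]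
  zify
  simp_rw [← sum_incMatrix_row]
  exact Finset.sum_comm.trans (by simp [sum_incMatrix_col])

variable [Finite Pt] (hD : IsDesign 𝓑 k lam)
include hD

theorem IsDesign.repNum_mul_blockSize (x : Pt) :
    (repNum 𝓑 x * k : ℤ) = repNum 𝓑 x - lam + lam * Nat.card Pt := by
  classical
  have := Fintype.ofFinite Pt
  rw [hD.repNum_mul_eq_of_sum_block_eq (fun _ => (1 : ℤ)) x k fun B hB _ => by
    simpa using hD.card_filter_mem_block hB]
  simp

theorem IsDesign.card_points_le_card_blocks (h : ∀ x, lam < repNum 𝓑 x) :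
    Nat.card Pt ≤ Nat.card 𝓑 := by
  classical
  have := Fintype.ofFinite Pt
  have posDef : (incMatrix 𝓑 ℝ * (incMatrix 𝓑 ℝ)ᵀ).PosDef := by
    rw [hD.incMatrix_mul_transpose]
    refine (PosDef.diagonal fun x => ?_).add_posSemidef ((posSemidef_vecMulVec_self_star 1).smul ?_)
    · exact sub_pos.2 (mod_cast h x)
    · exact lam.cast_nonneg
  rw [Nat.card_eq_fintype_card, Nat.card_eq_fintype_card, ← rank_of_isUnit _ posDef.isUnit]
  exact (rank_mul_le_left _ _).trans (rank_le_card_width _)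

theorem IsDesign.blockSize_le_repNum (hlam : 0 < lam) (hkv : k < Nat.card Pt) (x : Pt) :
    k ≤ repNum 𝓑 x := by
  obtain rfl | hk0 := k.eq_zero_or_pos
  · exact Nat.zero_le _
  have hk : k ≠ 1 := by
    rintro rfl
    have := hD.repNum_mul_blockSize x
    zify at *
    nlinarith
  have repNum_eq (y : Pt) : repNum 𝓑 y = repNum 𝓑 x := by
    have hx := hD.repNum_mul_blockSize x
    have hy := hD.repNum_mul_blockSize y
    zify at hk ⊢
    refine mul_right_cancel₀ (sub_ne_zero.2 hk) ?_
    linear_combination hy - hx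
  have lam_lt (y : Pt) : lam < repNum 𝓑 y := by
    have hy := hD.repNum_mul_blockSize y
    zify at *
    nlinarith
  have fisher := hD.card_points_le_card_blocks lam_lt
  have := Fintype.ofFinite Pt
  have sum_eq := hD.sum_repNum
  simp only [repNum_eq, Finset.sum_const, Finset.card_univ, smul_eq_mul,
    ← Nat.card_eq_fintype_card] at sum_eq
  refine Nat.le_of_mul_le_mul_left ?_ (hkv.trans_le' k.zero_le)
  exact (Nat.mul_le_mul_right k fisher).trans_eq sum_eq.symm

end Designs

section FixedPoints

open MulAction

variable {X Pt : Type*} [Group X] [MulAction X Pt]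

/-- The number of involutions of `X` that fix both `x` and `y`; for fixed `x` it serves as a
weight of the point `y` that is invariant under the stabilizer of `x`. -/
noncomputable def numInvolutionsFixing (X : Type*) [Group X] [MulAction X Pt] (x y : Pt) : ℕ :=
  Nat.card {t : X // (orderOf t = 2 ∧ t • x = x) ∧ t • y = y}

theorem numInvolutionsFixing_apply_apply (e : X ≃* X) (f : Equiv.Perm Pt)
    (hef : ∀ (t : X) y, e t • f y = f (t • y)) (x y : Pt) :
    numInvolutionsFixing X (f x) (f y) = numInvolutionsFixing X x y :=
  (Nat.card_congr (e.toEquiv.subtypeEquiv fun t => by simp [hef, MulEquiv.orderOf_eq])).symm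

theorem numInvolutionsFixing_smul_smul_of_normal {G : Type*} [Group G] [MulAction G Pt]
    (N : Subgroup G) [N.Normal] (g : G) (x y : Pt) :
    numInvolutionsFixing N (g • x) (g • y) = numInvolutionsFixing N x y :=
  numInvolutionsFixing_apply_apply (MulAut.conjNormal g) (toPerm g)
    (fun t y => by simp [Subgroup.smul_def, mul_smul]) x y

theorem numInvolutionsFixing_smul_smul (g : X) (x y : Pt) :
    numInvolutionsFixing X (g • x) (g • y) = numInvolutionsFixing X x y :=
  numInvolutionsFixing_apply_apply (MulAut.conj g) (toPerm g) (fun t y => by simp [mul_smul]) x y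

theorem numInvolutionsFixing_self (x : Pt) :
    numInvolutionsFixing X x x = Nat.card {t : stabilizer X x // orderOf t = 2} := by
  simp only [numInvolutionsFixing, and_assoc, and_self, ← Subgroup.orderOf_coe]
  simp only [and_comm, ← mem_stabilizer_iff]
  exact (Nat.card_congr (Equiv.subtypeSubtypeEquivSubtypeInter _ _)).symm

theorem card_fixedBy_eq_of_isConj {s t : X} (h : IsConj s t) :
    Nat.card (fixedBy Pt s) = Nat.card (fixedBy Pt t) := by
  obtain ⟨g, rfl⟩ := isConj_iff.1 h
  rw [← smul_fixedBy]
  exact (Set.natCard_smul_set g _).symm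

variable [Finite X]

theorem sum_card_fixing [Fintype Pt] {p : X → Prop} {m : ℕ}
    (h : ∀ t, p t → Nat.card (fixedBy Pt t) = m) :
    ∑ y : Pt, Nat.card {t : X // p t ∧ t • y = y} = Nat.card {t // p t} * m := by
  have := Fintype.ofFinite {t // p t}
  let e : (Σ y : Pt, {t : X // p t ∧ t • y = y}) ≃ Σ t : {t // p t}, fixedBy Pt t.1 :=
    { toFun a := ⟨⟨a.2.1, a.2.2.1⟩, a.1, a.2.2.2⟩
      invFun a := ⟨a.2.1, a.1.1, a.1.2, a.2.2⟩
      left_inv _ := rfl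
      right_inv _ := rfl }
  rw [← Nat.card_sigma, Nat.card_congr e, Nat.card_sigma]
  simp [fun t : {t // p t} => h t t.2]

variable {m : ℕ} (h : ∀ t : X, orderOf t = 2 → Nat.card (fixedBy Pt t) = m)
include h

theorem sum_numInvolutionsFixing [Fintype Pt] (x : Pt) :
    ∑ y, numInvolutionsFixing X x y = Nat.card {t : stabilizer X x // orderOf t = 2} * m := by
  rw [← numInvolutionsFixing_self]
  simp only [numInvolutionsFixing, and_assoc, and_self]
  simp only [← and_assoc]
  exact sum_card_fixing fun t ht => h t ht.1

theorem card_points_mul_card_orderOf_eq_two_stabilizer [Finite Pt] [IsPretransitive X Pt]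
    (x : Pt) :
    Nat.card Pt * Nat.card {t : stabilizer X x // orderOf t = 2} =
      Nat.card {t : X // orderOf t = 2} * m := by
  have := Fintype.ofFinite Pt
  rw [← sum_card_fixing h, ← numInvolutionsFixing_self, Nat.card_eq_fintype_card, ← smul_eq_mul,
    ← Finset.card_univ, ← Finset.sum_const]
  refine Finset.sum_congr rfl fun y _ => ?_
  obtain ⟨g, rfl⟩ := exists_smul_eq X x y
  rw [← numInvolutionsFixing_smul_smul g]
  simp only [numInvolutionsFixing, and_assoc, and_self]

end FixedPoints

section SquareField

open MulAction

theorem card_orderOf_eq_congr {G H : Type*} [Group G] [Group H] (e : G ≃* H) (n : ℕ) :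
    Nat.card {x : G // orderOf x = n} = Nat.card {y : H // orderOf y = n} :=
  Nat.card_congr (e.toEquiv.subtypeEquiv fun x => by simp [e.orderOf_eq])

theorem ringChar_ne_two_of_odd_card {K : Type*} [Field K] [Fintype K]
    (h : Odd (Fintype.card K)) : ringChar K ≠ 2 := fun hK =>
  Nat.not_even_iff_odd.2 h (Nat.even_iff.2 (FiniteField.even_card_of_char_two hK))

theorem isSquare_neg_one_of_card_eq_sq {K : Type*} [Field K] [Fintype K] {n : ℕ}
    (hcard : Fintype.card K = n ^ 2) : IsSquare (-1 : K) :=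
  FiniteField.isSquare_neg_one_iff.2 fun h => by
    rw [hcard, Nat.pow_mod] at h
    have := Nat.mod_lt n four_pos
    interval_cases n % 4 <;> simp at h

variable {F F₀ : Type*} [Field F] [Fintype F] [Field F₀] [Fintype F₀]
  {X Pt : Type*} [Group X] [MulAction X Pt] [IsPretransitive X Pt]
  (hcard : Fintype.card F = Fintype.card F₀ ^ 2) (hodd : Odd (Fintype.card F₀)) (eX : X ≃* PSL2 F)
  {x : Pt} (ex : stabilizer X x ≃* PGL2 F₀)
include hcard hodd eX ex

theorem two_mul_card_points_of_stabilizer_PGL2 :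
    2 * Nat.card Pt = Fintype.card F₀ * (Fintype.card F₀ ^ 2 + 1) := by
  have hchar : ringChar F ≠ 2 := ringChar_ne_two_of_odd_card (hcard ▸ hodd.pow)
  have orbit_stabilizer := (stabilizer X x).index_mul_card
  rw [index_stabilizer_of_transitive, Nat.card_congr ex.toEquiv, card_PGL2,
    Nat.card_congr eX.toEquiv] at orbit_stabilizer
  have card_PSL2 := two_mul_card_PSL2 hchar
  have sq_sub_one : (Fintype.card F₀ ^ 2) ^ 2 - 1 =
      (Fintype.card F₀ ^ 2 + 1) * (Fintype.card F₀ ^ 2 - 1) := by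
    simpa only [one_pow] using Nat.sq_sub_sq (Fintype.card F₀ ^ 2) 1
  rw [← orbit_stabilizer, hcard, sq_sub_one] at card_PSL2
  have hq : 0 < Fintype.card F₀ ^ 2 - 1 :=
    Nat.sub_pos_of_lt (Nat.one_lt_pow two_ne_zero (Fintype.one_lt_card (α := F₀)))
  refine Nat.eq_of_mul_eq_mul_right (mul_pos (Fintype.card_pos (α := F₀)) hq) ?_
  linear_combination card_PSL2

theorem card_fixedBy_of_stabilizer_PGL2 (t : X) (ht : orderOf t = 2) :
    Nat.card (fixedBy Pt t) = Fintype.card F₀ := by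
  have : Finite X := Finite.of_equiv _ eX.symm.toEquiv
  have : Finite Pt := Finite.of_surjective (fun g : X => g • x) (exists_smul_eq X x)
  have hchar : ringChar F ≠ 2 := ringChar_ne_two_of_odd_card (hcard ▸ hodd.pow)
  have hsq : IsSquare (-1 : F) := isSquare_neg_one_of_card_eq_sq hcard
  have conj (s : X) (hs : orderOf s = 2) : IsConj s t := by
    have := isConj_PSL2_of_orderOf_eq_two (Ring.two_ne_zero hchar) hsq
      ((eX.orderOf_eq s).trans hs) ((eX.orderOf_eq t).trans ht)
    simpa using eX.symm.toMonoidHom.map_isConj this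
  have count := card_points_mul_card_orderOf_eq_two_stabilizer
    (fun s hs => card_fixedBy_eq_of_isConj (Pt := Pt) (conj s hs)) x
  rw [card_orderOf_eq_congr eX, card_orderOf_eq_congr ex,
    card_orderOf_eq_two_PGL2 (ringChar_ne_two_of_odd_card hodd)] at count
  have card_points := two_mul_card_points_of_stabilizer_PGL2 hcard hodd eX ex
  have card_inv := two_mul_card_orderOf_eq_two_PSL2_of_isSquare hchar hsq
  rw [hcard] at card_inv
  have hq : 0 < Fintype.card F₀ ^ 2 * (Fintype.card F₀ ^ 2 + 1) :=
    mul_pos (pow_pos Fintype.card_pos 2) (Nat.succ_pos _)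
  refine Nat.eq_of_mul_eq_mul_left hq ?_
  calc Fintype.card F₀ ^ 2 * (Fintype.card F₀ ^ 2 + 1) * Nat.card (fixedBy Pt t)
      = 2 * (Nat.card Pt * Fintype.card F₀ ^ 2) := by rw [← card_inv, count, mul_assoc]
    _ = Fintype.card F₀ ^ 2 * (Fintype.card F₀ ^ 2 + 1) * Fintype.card F₀ := by
      rw [← mul_assoc, card_points]
      ring

end SquareField

open MulAction in
theorem IsDesign.repNum_dvd_of_stabilizer_PGL2
    {F F₀ : Type*} [Field F] [Fintype F] [Field F₀] [Fintype F₀]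
    (hcard : Fintype.card F = Fintype.card F₀ ^ 2) (hodd : Odd (Fintype.card F₀))
    {Pt : Type*} [Finite Pt] {G : Type*} [Group G] [MulAction G Pt] {𝓑 : Set (Set Pt)} {k lam : ℕ}
    (hD : IsDesign 𝓑 k lam) (hflag : FlagTransitive G 𝓑) (N : Subgroup G) [N.Normal]
    [IsPretransitive N Pt] (eN : N ≃* PSL2 F) {x : Pt} (ex : stabilizer N x ≃* PGL2 F₀) :
    (repNum 𝓑 x : ℤ) ∣
      lam * (Fintype.card F₀ ^ 2 * Fintype.card F₀ - Fintype.card F₀ ^ 2) := by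
  have : Finite N := Finite.of_equiv _ eN.symm.toEquiv
  have := Fintype.ofFinite Pt
  have dvd := hD.repNum_dvd_mul_sum_sub hflag x (numInvolutionsFixing N x ·) fun g hg y => by
    simpa only [hg] using congrArg Nat.cast (numInvolutionsFixing_smul_smul_of_normal N g x y)
  rw [← Nat.cast_sum, sum_numInvolutionsFixing (card_fixedBy_of_stabilizer_PGL2 hcard hodd eN ex),
    numInvolutionsFixing_self, card_orderOf_eq_congr ex,
    card_orderOf_eq_two_PGL2 (ringChar_ne_two_of_odd_card hodd)] at dvd
  exact_mod_cast dvd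

section Arithmetic

theorem dvd_mul_sub_one_of_dvd {q v lam r : ℤ} (hq : Odd q) (hv : 2 * v = q * (q ^ 2 + 1))
    (hpoints : r ∣ lam * (v - 1)) (hweight : r ∣ lam * (q ^ 2 * q - q ^ 2)) :
    r ∣ lam * (q - 1) := by
  have coprime : IsCoprime (v - 1) q := by
    obtain ⟨m, rfl⟩ := hq
    exact ⟨2 * m, 1 - m * ((2 * m + 1) ^ 2 + 1), by linear_combination m * hv⟩
  obtain ⟨a, b, hab⟩ := coprime.pow_right (n := 2)
  have : lam * (q - 1) =
      a * (q - 1) * (lam * (v - 1)) + b * (lam * (q ^ 2 * q - q ^ 2)) := by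
    linear_combination -lam * (q - 1) * hab
  exact this ▸ dvd_add (hpoints.mul_left _) (hweight.mul_left _)

theorem three_lt_of_le_mul_sub_one {q v k lam r : ℤ} (hq : 1 < q) (hlam : 0 < lam) (hk : 0 ≤ k)
    (hv : 2 * v = q * (q ^ 2 + 1)) (hrk : r * k = r - lam + lam * v) (hkr : k ≤ r)
    (hr : r ≤ lam * (q - 1)) : 3 < lam := by
  have one_lt_v : 1 < v := by nlinarith
  have r_pos : 0 < r := (hk.trans hkr).lt_of_ne fun h => by nlinarith
  have points_lt : lam * (v - 1) < (lam * (q - 1)) ^ 2 :=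
    calc lam * (v - 1) = r * (k - 1) := by linear_combination -hrk
      _ < r * k := by nlinarith
      _ ≤ (lam * (q - 1)) ^ 2 := by nlinarith
  have quadratic_lt : q ^ 2 + q + 2 < 2 * lam * (q - 1) := by
    refine lt_of_mul_lt_mul_left ?_ (mul_pos hlam (sub_pos.2 hq)).le
    linear_combination 2 * points_lt - lam * hv
  nlinarith [sq_nonneg (2 * q - 5)]

end Arithmetic

end FT

open FT

open MulAction in
theorem stmt_9_general {F F₀ : Type*} [Field F] [Fintype F] [Field F₀] [Fintype F₀]
    (hcard : Fintype.card F = Fintype.card F₀ ^ 2) (hodd : Odd (Fintype.card F₀))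
    {Pt : Type*} {G : Type*} [Group G] [MulAction G Pt] {𝓑 : Set (Set Pt)} {k lam : ℕ}
    (hD : IsDesign 𝓑 k lam) (hlam : 0 < lam) (hlam3 : lam ≤ 3)
    (hkv : k < Nat.card Pt) (hflag : FlagTransitive G 𝓑) (X : Subgroup G) [X.Normal]
    [IsPretransitive X Pt] (eX : X ≃* PSL2 F) (α : Pt) :
    IsEmpty (stabilizer X α ≃* PGL2 F₀) := by
  refine ⟨fun eα => ?_⟩
  have : Finite Pt := Nat.finite_of_card_ne_zero (Nat.ne_zero_of_lt hkv)
  have hv : (2 * Nat.card Pt : ℤ) = Fintype.card F₀ * (Fintype.card F₀ ^ 2 + 1) := by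
    exact_mod_cast two_mul_card_points_of_stabilizer_PGL2 hcard hodd eX eα
  have hrk := hD.repNum_mul_blockSize α
  have fisher := hD.blockSize_le_repNum hlam hkv α
  have weight_dvd := hD.repNum_dvd_of_stabilizer_PGL2 hcard hodd hflag X eX eα
  have points_dvd : (repNum 𝓑 α : ℤ) ∣ lam * (Nat.card Pt - 1) :=
    ⟨k - 1, by linear_combination -hrk⟩
  have hq : (1 : ℤ) < Fintype.card F₀ := mod_cast Fintype.one_lt_card
  have r_le := Int.le_of_dvd (mul_pos (mod_cast hlam) (sub_pos.2 hq))
    (dvd_mul_sub_one_of_dvd (mod_cast hodd) hv points_dvd weight_dvd)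
  have three_lt := three_lt_of_le_mul_sub_one hq (mod_cast hlam) k.cast_nonneg hv hrk
    (mod_cast fisher) r_le
  lia

/-- In the setting of a non-trivial, non-symmetric flag-transitive,
point-primitive `2-(v,k,3)` design with `3 ∣ r`, almost simple automorphism group `G` with
socle `X ≅ PSL(2,q)` acting point-primitively with maximal point stabilizer `X_α`:
the stabilizer `X_α` is not isomorphic to `PGL(2,q₀)` with `q = q₀²` odd. -/
theorem stmt_9
    (q : ℕ) (hq4 : 4 ≤ q)
    (F : Type) [Field F] [Fintype F] (hF : Fintype.card F = q)
    {Pt : Type*} [Fintype Pt] {G : Type*} [Group G] [MulAction G Pt] [FaithfulSMul G Pt]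
    -- `D = (Pt, 𝓑)` is a non-trivial, non-symmetric `2-(v,k,3)` design …
    (𝓑 : Set (Set Pt)) (v k : ℕ) (hv : Nat.card Pt = v)
    (hD : IsDesign 𝓑 k 3) (hnt : 2 < k ∧ k < v - 1)
    (hnonsym : Nat.card 𝓑 ≠ v)
    -- … whose replication number `r` is divisible by 3, …
    (r : ℕ) (hr : ∀ x : Pt, repNum 𝓑 x = r) (h3r : 3 ∣ r)
    -- … admitting the flag-transitive, point-primitive automorphism group `G`, …
    (hacts : ActsOn G 𝓑) (hflag : FlagTransitive G 𝓑)
    (hprim : PointPrimitive G Pt)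
    -- … where `G` is almost simple with socle `X ≅ PSL(2,q)` (so `PSL(2,q) ⊴ G ≤ PΓL(2,q)`):
    (X : Subgroup G) (hXnormal : X.Normal)
    (hXiso : Nonempty (X ≃* PSL2 F))
    (hXcent : Subgroup.centralizer (X : Set G) = ⊥)
    -- `X` acts point-primitively on `D`, with maximal point stabilizer `X_α`:
    (hXprim : PointPrimitive X Pt)
    (α : Pt) (hmax : IsCoatom (MulAction.stabilizer X α))
    :
    ∀ (q₀ : ℕ) (F₀ : Type) [Field F₀] [Fintype F₀], Fintype.card F₀ = q₀ →
      q = q₀ ^ 2 → Odd q →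
      IsEmpty ((MulAction.stabilizer X α) ≃* PGL2 F₀) := by
  rintro _ F₀ _ _ rfl rfl hodd
  have := hXprim.1
  exact stmt_9_general hF ((Nat.odd_pow_iff two_ne_zero).1 hodd) hD three_pos le_rfl
    (by lia) hflag X hXiso.some α
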